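/- Let G = (V,E) be a finite DAG with ω(G) ≤ m and let X ∈ V be a vertex such that for every S ⊆ Mb(X) with |S| ≤ m−2: (i) for all distinct Y,Z ∈ Mb(X)∖S, the set (Mb(X)∪{X})∖({Y,Z}∪S) does not d-separate Y and Z in G; and (ii) for all Y ∈ Mb(X)∖S, the set Mb(X)∖({Y}∪S) does not d-separate X and Y in G. Then either X has no co-parents (CP(X) = ∅) or X has exactly m−1 children (|Ch(X)| = m−1). -/

import Mathlib

/-!
Call a co-parent `T` of `X` *terminal* if no co-parent is a descendant of `T`.

* Lower bound (`terminal_card`). Let `T` be terminal and `D` the set of children of `X` descending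
  from `T`. Then `Mb(X) \ ({T} ∪ D)` d-separates `X` and `T`: an open path from `X` cannot start
  with a parent of `X`, which is conditioned on. If it starts with a child `C ∉ D`, then `C` is a
  collider and the vertex after it is a parent of `C`, so it lies in `Mb(X)`; being an unconditioned
  non-collider or `T` itself, it lies in `{T} ∪ D`, which forces `C ∈ D`. If it starts with a child
  `C ∈ D`, no vertex of the conditioning set descends from `C`, so there is never an open collider
  and the path is directed from `C` to `T`, giving a cycle. Hence (ii) forces `|D| > m - 2`.

* Upper bound (`children_adj`). The children of `X` form a clique. Otherwise take a child `Y'` that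
  is not adjacent to some other child `Y`, with no descendant having the same property, and let `S`
  be the set of children descending from `Y'`. Then `S ∪ {X, Y'}` is a clique, so `|S| ≤ m - 2`. By
  the lower bound no co-parent descends from `Y'`, for a terminal one would give more than `m - 2`
  elements of `S`. So `(Mb(X) ∪ {X}) \ ({Y, Y'} ∪ S)` contains every parent of `Y'` and no
  descendant of `Y'`, and it d-separates `Y'` and `Y`, contradicting (i).

If a co-parent exists, so does a terminal one, and both bounds together give `|Ch(X)| = m - 1`.
-/

open Set

variable {V : Type*}

/-- Adjacency (neighbor relation) in a directed graph with edge relation `E`. -/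
def Adj (E : V → V → Prop) (x y : V) : Prop := E x y ∨ E y x

/-- The digraph `E` is acyclic (no directed cycles). -/
def Acyclic (E : V → V → Prop) : Prop := ∀ v : V, ¬ Relation.TransGen E v v

/-- Parents of `x`. -/
def Pa (E : V → V → Prop) (x : V) : Set V := {y | E y x}

/-- Children of `x`. -/
def Ch (E : V → V → Prop) (x : V) : Set V := {y | E x y}

/-- Co-parents of `x`: distinct, non-adjacent vertices sharing a child with `x`. -/
def CP (E : V → V → Prop) (x : V) : Set V :=
  {y | y ≠ x ∧ ¬ Adj E x y ∧ ∃ w, E x w ∧ E y w}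

/-- The (graphical) Markov boundary of `x`. -/
def Mb (E : V → V → Prop) (x : V) : Set V := Pa E x ∪ Ch E x ∪ CP E x

/-- `y` is a descendant of `x`: directed path of length ≥ 1. -/
def Desc (E : V → V → Prop) : V → V → Prop := Relation.TransGen E

/-- `p : Fin (n+1) → V` is a path: distinct vertices with consecutive vertices adjacent. -/
def IsPath (E : V → V → Prop) {n : ℕ} (p : Fin (n + 1) → V) : Prop :=
  Function.Injective p ∧ ∀ i : Fin n, Adj E (p i.castSucc) (p i.succ)

/-- The path `p` is blocked by the set `S`: some interior non-collider vertex lies in `S`,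
or some interior collider vertex is such that neither it nor any of its descendants lies in `S`. -/
def Blocked (E : V → V → Prop) (S : Set V) {n : ℕ} (p : Fin (n + 1) → V) : Prop :=
  ∃ k : ℕ, ∃ _hk0 : 0 < k, ∃ _hkn : k < n,
    (¬ (E (p ⟨k - 1, by omega⟩) (p ⟨k, by omega⟩) ∧
          E (p ⟨k + 1, by omega⟩) (p ⟨k, by omega⟩)) ∧ p ⟨k, by omega⟩ ∈ S) ∨
    ((E (p ⟨k - 1, by omega⟩) (p ⟨k, by omega⟩) ∧
          E (p ⟨k + 1, by omega⟩) (p ⟨k, by omega⟩)) ∧ p ⟨k, by omega⟩ ∉ S ∧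
        ∀ d, Desc E (p ⟨k, by omega⟩) d → d ∉ S)

/-- `S` d-separates the distinct vertices `x` and `y` in the digraph `E`. -/
def DSep (E : V → V → Prop) (x y : V) (S : Set V) : Prop :=
  x ≠ y ∧ x ∉ S ∧ y ∉ S ∧
    ∀ (n : ℕ) (p : Fin (n + 1) → V), 0 < n → IsPath E p →
      p 0 = x → p (Fin.last n) = y → Blocked E S p

/-- The induced subgraph obtained from `E` by deleting the vertex `x`. -/
def Del (E : V → V → Prop) (x : V) : V → V → Prop := fun a b => E a b ∧ a ≠ x ∧ b ≠ x

/-- `x` is removable in `E`: d-separation statements not involving `x` are the same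
in `E` and in the induced subgraph with `x` deleted. -/
def Removable (E : V → V → Prop) (x : V) : Prop :=
  ∀ y z : V, y ≠ x → z ≠ x → y ≠ z → ∀ S : Set V, x ∉ S →
    (DSep E y z S ↔ DSep (Del E x) y z S)

/-- The clique number of the skeleton of `E` is at most `m`. -/
def CliqueNumLE (E : V → V → Prop) (m : ℕ) : Prop :=
  ∀ K : Finset V, (∀ x ∈ K, ∀ y ∈ K, x ≠ y → Adj E x y) → K.card ≤ m

/-- Conditions (i) and (ii) for every `S ⊆ Mb(x)` with `|S| ≤ t`. -/
def RemCond (E : V → V → Prop) (x : V) (t : ℕ) : Prop :=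
  ∀ S : Finset V, ↑S ⊆ Mb E x → S.card ≤ t →
    (∀ y ∈ Mb E x \ ↑S, ∀ z ∈ Mb E x \ ↑S, y ≠ z →
        ¬ DSep E y z ((Mb E x ∪ {x}) \ ({y, z} ∪ ↑S))) ∧
    ∀ y ∈ Mb E x \ ↑S, ¬ DSep E x y (Mb E x \ ({y} ∪ ↑S))

/-- `E` is diamond-free: whenever `a`, `b`, `c` are all parents of some vertex `d` and `a`
is adjacent to both `b` and `c`, then `b` and `c` are adjacent. -/
def DiamondFree (E : V → V → Prop) : Prop :=
  ∀ a b c d : V, a ≠ b → a ≠ c → b ≠ c → E a d → E b d → E c d →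
    Adj E a b → Adj E a c → Adj E b c

/-- An open path between `x` and `y` given `Z`, as a sequence `q 0, …, q n` indexed by naturals
(values beyond `n` are irrelevant). A collider is open when it is an ancestor of, or equal to, an
element of `Z`. -/
structure OpenPath (E : V → V → Prop) (x y : V) (Z : Set V) (n : ℕ) (q : ℕ → V) : Prop where
  pos : 0 < n
  start : q 0 = x
  finish : q n = y
  inj : ∀ i j, i ≤ n → j ≤ n → q i = q j → i = j
  adj : ∀ i, i < n → Adj E (q i) (q (i + 1))
  noncollider : ∀ k, k + 1 < n → ¬ (E (q k) (q (k + 1)) ∧ E (q (k + 2)) (q (k + 1))) →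
    q (k + 1) ∉ Z
  collider : ∀ k, k + 1 < n → E (q k) (q (k + 1)) → E (q (k + 2)) (q (k + 1)) →
    ∃ d ∈ Z, Relation.ReflTransGen E (q (k + 1)) d

lemma exists_openPath {E : V → V → Prop} {x y : V} {Z : Set V} (hxy : x ≠ y) (hx : x ∉ Z)
    (hy : y ∉ Z) (h : ¬ DSep E x y Z) : ∃ n q, OpenPath E x y Z n q := by
  unfold DSep at h
  push Not at h
  obtain ⟨n, p, hn, hp, h0, hl, hb⟩ := h hxy hx hy
  set q : ℕ → V := fun k => if h : k < n + 1 then p ⟨k, h⟩ else p 0 with hq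
  have hqk : ∀ k (h : k < n + 1), q k = p ⟨k, h⟩ := fun k h => dif_pos h
  refine ⟨n, q, hn, ?_, ?_, ?_, ?_, ?_, ?_⟩
  · rw [hqk 0 (by omega)]; exact h0
  · rw [hqk n (by omega)]; exact hl
  · intro i j hi hj hij
    rw [hqk i (by omega), hqk j (by omega)] at hij
    simpa using hp.1 hij
  · intro i hi
    rw [hqk i (by omega), hqk (i + 1) (by omega)]
    exact hp.2 ⟨i, hi⟩
  · intro k hk hc hZ
    refine hb ⟨k + 1, by omega, hk, Or.inl ?_⟩
    rw [hqk k (by omega), hqk (k + 1) (by omega), hqk (k + 2) (by omega)] at hc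
    rw [hqk (k + 1) (by omega)] at hZ
    exact ⟨hc, hZ⟩
  · intro k hk h1 h2
    by_contra hcon
    push Not at hcon
    refine hb ⟨k + 1, by omega, hk, Or.inr ?_⟩
    rw [hqk (k + 1) (by omega)] at hcon h1 h2
    rw [hqk k (by omega)] at h1
    rw [hqk (k + 2) (by omega)] at h2
    exact ⟨⟨h1, h2⟩, fun hZ => hcon _ hZ .refl, fun d hd hZ => hcon _ hZ hd.to_reflTransGen⟩

/-- An open path whose first edge points forward to a vertex without conditioned descendants
meets no collider, so it is directed. -/
lemma OpenPath.directed {E : V → V → Prop} {x y : V} {Z : Set V} {n : ℕ} {q : ℕ → V}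
    (h : OpenPath E x y Z n q) (h1 : E (q 0) (q 1))
    (hZ : ∀ d ∈ Z, ¬ Relation.ReflTransGen E (q 1) d) :
    Relation.ReflTransGen E (q 1) y := by
  have key : ∀ j, j < n → E (q j) (q (j + 1)) ∧ Relation.ReflTransGen E (q 1) (q (j + 1)) := by
    intro j
    induction j with
    | zero => exact fun _ => ⟨h1, .refl⟩
    | succ j ih =>
      intro hj
      obtain ⟨hE, hR⟩ := ih (by omega)
      rcases h.adj (j + 1) hj with h2 | h2
      · exact ⟨h2, hR.tail h2⟩
      · obtain ⟨d, hd, hRd⟩ := h.collider j hj hE h2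
        exact absurd (hR.trans hRd) (hZ d hd)
  have := (key (n - 1) (by have := h.pos; omega)).2
  rwa [Nat.sub_add_cancel h.pos, h.finish] at this

lemma notMem_Mb_self {E : V → V → Prop} (hacy : Acyclic E) (X : V) : X ∉ Mb E X := by
  rintro ((h | h) | h)
  · exact hacy X (.single h)
  · exact hacy X (.single h)
  · exact h.1 rfl

lemma parent_of_child_mem_Mb {E : V → V → Prop} {X C W : V} (hC : E X C) (hW : E W C)
    (hne : W ≠ X) : W ∈ Mb E X := by
  by_cases h : Adj E X W
  · rcases h with h | h
    · exact Or.inl (Or.inr h)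
    · exact Or.inl (Or.inl h)
  · exact Or.inr ⟨hne, h, C, hC, hW⟩

/-- A terminal co-parent has more than `t` descendants among the children of `X`. -/
lemma terminal_card {E : V → V → Prop} (hacy : Acyclic E) {X : V} {t : ℕ}
    (hX : RemCond E X t) {T : V} (hT : T ∈ CP E X)
    (hterm : ∀ T' ∈ CP E X, ¬ Relation.TransGen E T T') (D : Finset V)
    (hD : ∀ c, c ∈ D ↔ E X c ∧ Relation.TransGen E T c) : t < D.card := by
  by_contra hcard
  obtain ⟨hTX, hTadj, -⟩ := id hT
  have hDsub : (↑D : Set V) ⊆ Mb E X := fun c hc => Or.inl (Or.inr ((hD c).1 hc).1)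
  have hTD : T ∉ D := fun h => hacy T ((hD T).1 h).2
  obtain ⟨n, q, hq⟩ := exists_openPath (Ne.symm hTX)
    (fun h => notMem_Mb_self hacy X h.1) (fun h => h.2 (Or.inl rfl))
    ((hX D hDsub (not_lt.1 hcard)).2 T ⟨Or.inr hT, hTD⟩)
  have hadj := hq.adj 0 hq.pos
  have hn1 : 1 < n := by
    by_contra hn
    have : n = 1 := by have := hq.pos; omega
    have hf := hq.finish
    rw [this] at hf
    rw [hq.start, zero_add, hf] at hadj
    exact hTadj hadj
  have hstart := hq.start
  have hq1T : q 1 ≠ T := fun h => by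
    have := hq.inj 1 n hn1.le le_rfl (h.trans hq.finish.symm)
    omega
  rw [zero_add] at hadj
  rcases hadj with hXC | hPX
  · have hXC' : E X (q 1) := hstart ▸ hXC
    by_cases hCD : q 1 ∈ D
    · have hTC := ((hD _).1 hCD).2
      have hdir := hq.directed hXC (by
        rintro d ⟨hd, hd'⟩ hR
        have hTd : Relation.TransGen E T d := hTC.trans_left hR
        rcases hd with (hd | hd) | hd
        · exact hacy X ((Relation.TransGen.single hXC').trans_left (hR.tail hd))
        · exact hd' (Or.inr ((hD d).2 ⟨hd, hTd⟩))
        · exact hterm d hd hTd)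
      exact hacy T (hTC.trans_left hdir)
    · have hCZ : q 1 ∈ Mb E X \ ({T} ∪ ↑D) :=
        ⟨Or.inl (Or.inr hXC'), by rintro (h | h); exacts [hq1T h, hCD h]⟩
      have hcol : E (q 0) (q 1) ∧ E (q 2) (q 1) := by
        by_contra hc
        exact hq.noncollider 0 hn1 hc hCZ
      have hWX : q 2 ≠ X := fun h => by
        have := hq.inj 2 0 hn1 (by omega) (h.trans hstart.symm)
        omega
      have hWM := parent_of_child_mem_Mb hXC' hcol.2 hWX
      have hW : q 2 ∈ ({T} ∪ ↑D : Set V) := by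
        by_contra hW
        rcases Nat.lt_or_ge 2 n with h2 | h2
        · exact hq.noncollider 1 h2
            (fun hc => hacy _ ((Relation.TransGen.single hc.1).tail hcol.2)) ⟨hWM, hW⟩
        · have : n = 2 := by omega
          exact hW (Or.inl (by rw [← hq.finish, this]; rfl))
      refine hCD ((hD _).2 ⟨hXC', ?_⟩)
      rcases hW with hW | hW
      · have hW' : q 2 = T := hW
        exact hW' ▸ Relation.TransGen.single hcol.2
      · exact ((hD _).1 hW).2.tail hcol.2
  · have hPX' : E (q 1) X := hstart ▸ hPX
    refine hq.noncollider 0 hn1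
      (fun hc => hacy _ ((Relation.TransGen.single hc.1).tail hPX)) ⟨Or.inl (Or.inl hPX'), ?_⟩
    rintro (h | h)
    · exact hq1T h
    · exact hacy X ((Relation.TransGen.single ((hD _).1 h).1).tail hPX')

/-- In a finite DAG every nonempty set has an element with no descendant in the set. -/
lemma exists_terminal [Finite V] {E : V → V → Prop} (hacy : Acyclic E) (A : Set V)
    (hA : A.Nonempty) : ∃ a ∈ A, ∀ b ∈ A, ¬ Relation.TransGen E a b := by
  have : Std.Irrefl (fun a b => Relation.TransGen E b a) := ⟨hacy⟩
  have : IsTrans V (fun a b => Relation.TransGen E b a) := ⟨fun _ _ _ h1 h2 => h2.trans h1⟩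
  exact (Finite.wellFounded_of_trans_of_irrefl (fun a b => Relation.TransGen E b a)).has_min A hA

lemma Adj.symm' {E : V → V → Prop} {a b : V} (h : Adj E a b) : Adj E b a := Or.symm h

lemma children_adj [Fintype V] {E : V → V → Prop} (hacy : Acyclic E) {m : ℕ}
    (hclq : CliqueNumLE E m) {X : V} (hX : RemCond E X (m - 2)) {c c' : V}
    (hc : E X c) (hc' : E X c') (hne : c ≠ c') : Adj E c c' := by
  classical
  by_contra hcon
  obtain ⟨Y', ⟨hY', Y, hY, hYne, hYadj⟩, hterm⟩ := exists_terminal hacy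
    {a | E X a ∧ ∃ b, E X b ∧ a ≠ b ∧ ¬ Adj E a b} ⟨c, hc, c', hc', hne, hcon⟩
  have hnadj : ∀ a b, Relation.TransGen E Y' a → E X a → E X b → a ≠ b → Adj E a b := by
    intro a b hYa ha hb hab
    by_contra h
    exact hterm a ⟨ha, b, hb, hab, h⟩ hYa
  have hYY : ¬ Relation.TransGen E Y' Y :=
    hterm Y ⟨hY, Y', hY', hYne.symm, fun h => hYadj h.symm'⟩
  set S : Finset V := Finset.univ.filter fun a => E X a ∧ Relation.TransGen E Y' a with hS
  have hmem : ∀ a, a ∈ S ↔ E X a ∧ Relation.TransGen E Y' a := by simp [hS]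
  have hSX : X ∉ S := fun h => hacy X (.single ((hmem X).1 h).1)
  have hSY' : Y' ∉ S := fun h => hacy _ ((hmem _).1 h).2
  have hXY' : X ≠ Y' := fun h => hacy X (.single (by rw [← h] at hY'; exact hY'))
  have hcl := hclq (insert X (insert Y' S)) (by
    have hch : ∀ a ∈ insert Y' S, E X a := by
      intro a ha
      rcases Finset.mem_insert.1 ha with rfl | ha
      exacts [hY', ((hmem _).1 ha).1]
    intro a ha b hb hab
    rcases Finset.mem_insert.1 ha with rfl | ha
    · rcases Finset.mem_insert.1 hb with rfl | hb
      exacts [absurd rfl hab, Or.inl (hch _ hb)]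
    · rcases Finset.mem_insert.1 hb with rfl | hb
      · exact Or.inr (hch _ ha)
      · have hEa := hch _ ha
        have hEb := hch _ hb
        rcases Finset.mem_insert.1 ha with rfl | ha
        · rcases Finset.mem_insert.1 hb with rfl | hb
          exacts [absurd rfl hab, (hnadj _ _ ((hmem _).1 hb).2 hEb hEa hab.symm).symm']
        · exact hnadj _ _ ((hmem _).1 ha).2 hEa hEb hab)
  rw [Finset.card_insert_of_notMem (by simp [hXY', hSX]), Finset.card_insert_of_notMem hSY'] at hcl
  have hScard : S.card ≤ m - 2 := by omega
  have hcp : ∀ T ∈ CP E X, ¬ Relation.TransGen E Y' T := by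
    intro T₀ hT₀ hYT₀
    obtain ⟨T, ⟨hT, hYT⟩, hTt⟩ := exists_terminal hacy
      {T | T ∈ CP E X ∧ Relation.TransGen E Y' T} ⟨T₀, hT₀, hYT₀⟩
    have hlt := terminal_card hacy hX hT (fun T' hT' h => hTt T' ⟨hT', hYT.trans h⟩ h)
      (Finset.univ.filter fun a => E X a ∧ Relation.TransGen E T a) (by simp)
    have hle : (Finset.univ.filter fun a => E X a ∧ Relation.TransGen E T a).card ≤ S.card := by
      refine Finset.card_le_card fun a ha => ?_
      rw [Finset.mem_filter] at ha
      exact (hmem a).2 ⟨ha.2.1, hYT.trans ha.2.2⟩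
    omega
  have hSsub : (↑S : Set V) ⊆ Mb E X := fun a ha => Or.inl (Or.inr ((hmem a).1 ha).1)
  have hYS : Y ∉ S := fun h => hYY ((hmem _).1 h).2
  obtain ⟨n, q, hq⟩ := exists_openPath hYne
    (fun h => h.2 (Or.inl (Or.inl rfl))) (fun h => h.2 (Or.inl (Or.inr rfl)))
    ((hX S hSsub hScard).1 Y' ⟨Or.inl (Or.inr hY'), hSY'⟩ Y ⟨Or.inl (Or.inr hY), hYS⟩ hYne)
  have hadj := hq.adj 0 hq.pos
  have hstart := hq.start
  rw [zero_add] at hadj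
  have hn1 : 1 < n := by
    by_contra hn
    have : n = 1 := by have := hq.pos; omega
    have hf := hq.finish
    rw [this] at hf
    rw [hq.start, hf] at hadj
    exact hYadj hadj
  have hq1Y : q 1 ≠ Y := fun h => by
    have := hq.inj 1 n hn1.le le_rfl (h.trans hq.finish.symm)
    omega
  have hq1Y' : q 1 ≠ Y' := fun h => by
    have := hq.inj 1 0 hn1.le (by omega) (h.trans hstart.symm)
    omega
  rcases hadj with h1 | h1
  · have h1' : E Y' (q 1) := hstart ▸ h1
    refine hYY ((Relation.TransGen.single h1').trans_left (hq.directed h1 ?_))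
    rintro d ⟨hd, hd'⟩ hR
    have hYd : Relation.TransGen E Y' d := (Relation.TransGen.single h1').trans_left hR
    rcases hd with ((hd | hd) | hd) | hd
    · exact hacy X (((Relation.TransGen.single hY').trans hYd).tail hd)
    · exact hd' (Or.inr ((hmem d).2 ⟨hd, hYd⟩))
    · exact hcp d hd hYd
    · have hd : d = X := hd
      exact hacy X ((Relation.TransGen.single hY').trans (hd ▸ hYd))
  · have h1' : E (q 1) Y' := hstart ▸ h1
    refine hq.noncollider 0 hn1
      (fun hc => hacy _ ((Relation.TransGen.single hc.1).tail h1)) ⟨?_, ?_⟩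
    · by_cases h : q 1 = X
      · exact Or.inr h
      · exact Or.inl (parent_of_child_mem_Mb hY' h1' h)
    · rintro ((h | h) | h)
      · exact hq1Y' h
      · exact hq1Y h
      · exact hacy _ (((hmem _).1 h).2.tail h1')

/-- under the removability condition, either `X` has no co-parents or
`X` has exactly `m - 1` children. -/
theorem stmt6 [Fintype V] (E : V → V → Prop) (hacy : Acyclic E) (m : ℕ)
    (hclq : CliqueNumLE E m) (X : V) (hX : RemCond E X (m - 2)) :
    CP E X = ∅ ∨ (Ch E X).ncard = m - 1 := by
  classical
  rcases (CP E X).eq_empty_or_nonempty with h | h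
  · exact Or.inl h
  right
  set C : Finset V := Finset.univ.filter fun a => E X a with hC
  have hmem : ∀ a, a ∈ C ↔ E X a := by simp [hC]
  have hcard : (Ch E X).ncard = C.card := by
    rw [← Set.ncard_coe_finset]
    congr 1
    ext a
    simp [hmem, Ch]
  obtain ⟨T, hT, hterm⟩ := exists_terminal hacy _ h
  have hlt := terminal_card hacy hX hT hterm
    (Finset.univ.filter fun a => E X a ∧ Relation.TransGen E T a) (by simp)
  have hle : (Finset.univ.filter fun a => E X a ∧ Relation.TransGen E T a).card ≤ C.card := by
    refine Finset.card_le_card fun a ha => ?_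
    rw [Finset.mem_filter] at ha
    exact (hmem a).2 ha.2.1
  have hcl := hclq (insert X C) (by
    intro a ha b hb hab
    rcases Finset.mem_insert.1 ha with rfl | ha
    · rcases Finset.mem_insert.1 hb with rfl | hb
      exacts [absurd rfl hab, Or.inl ((hmem _).1 hb)]
    · rcases Finset.mem_insert.1 hb with rfl | hb
      · exact Or.inr ((hmem _).1 ha)
      · exact children_adj hacy hclq hX ((hmem _).1 ha) ((hmem _).1 hb) hab)
  rw [Finset.card_insert_of_notMem
    (fun h => hacy X (.single ((hmem X).1 h)))] at hcl
  omega
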